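/- Fix an integer n ≥ 3 and, for 1 ≤ i ≤ n−1, let b_i be the (n−1)×(n−1) matrix over the ring LaurentPolynomial ℤ (in the variable q) that agrees with the identity matrix except: (b_i)_{i,i} = −q²; (b_i)_{i,i−1} = q² when i ≥ 2; and (b_i)_{i,i+1} = 1 when i ≤ n−2. (So b_1 has top-left 2×2 block [[−q², 1], [0, 1]], b_{n−1} has bottom-right 2×2 block [[1, 0], [q², −q²]], and for 2 ≤ i ≤ n−2 the row i of b_i is (…, q², −q², 1, …) in columns i−1, i, i+1.) Then the reduced Burau matrices satisfy the braid group relations: b_i b_{i+1} b_i = b_{i+1} b_i b_{i+1} for 1 ≤ i ≤ n−2, and b_i b_j = b_j b_i whenever |i − j| ≥ 2. -/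

import Mathlib

open LaurentPolynomial

/-- The reduced Burau matrix `b_i` (1-based index `i`, `1 ≤ i ≤ n−1`): an
`(n−1)×(n−1)` matrix agreeing with the identity except in (1-based) row `i`, where the
entries in columns `i−1`, `i`, `i+1` are `q²`, `−q²`, `1` (the first only when `i ≥ 2`,
the last only when `i ≤ n−2`); here `q = T 1` and rows/columns are 0-based `Fin (n−1)`. -/
noncomputable def rburau (n i : ℕ) : Matrix (Fin (n - 1)) (Fin (n - 1)) (LaurentPolynomial ℤ) :=
  Matrix.of fun a b =>
    if (a : ℕ) + 1 = i then
      if (b : ℕ) + 1 = i then -(T 1 ^ 2)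
      else if (b : ℕ) + 2 = i then T 1 ^ 2
      else if (b : ℕ) = i then 1
      else 0
    else if (a : ℕ) = (b : ℕ) then 1 else 0

/-! Each `b_i` is a rank-one perturbation `1 + u_i f_i` of the identity, with `u_i` a standard basis
column. Products of such perturbations only involve the scalars `f_i u_j`, so both braid relations
reduce to identities between them: `f_i u_j = f_j u_i = 0` for distant indices, and
`1 + f_i u_i + (f_i u_j) (f_j u_i) = 1 - (1 + q²) + q² = 0` for adjacent ones. -/

open Matrix

section RankOnePerturbation

theorem one_add_braid_iff {M : Type*} [Ring M] {a b : M} :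
    (1 + a) * (1 + b) * (1 + a) = (1 + b) * (1 + a) * (1 + b) ↔
      a + a * a + a * b * a = b + b * b + b * a * b := by
  have expand (x y : M) : (1 + x) * (1 + y) * (1 + x) =
      (x + x * x + x * y * x) + (1 + x + y + x * y + y * x) := by noncomm_ring
  have swap : 1 + b + a + b * a + a * b = 1 + a + b + a * b + b * a := by abel
  rw [expand a b, expand b a, swap, add_left_inj]

variable {ι R : Type*} [Fintype ι] [Ring R] {u v f g : ι → R}

theorem vecMulVec_add_mul_self_add_mul_mul_eq_zero (h : 1 + f ⬝ᵥ u + f ⬝ᵥ v * g ⬝ᵥ u = 0) :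
    vecMulVec u f + vecMulVec u f * vecMulVec u f +
      vecMulVec u f * vecMulVec v g * vecMulVec u f = 0 :=
  calc
    _ = vecMulVec u ((1 + f ⬝ᵥ u + f ⬝ᵥ v * g ⬝ᵥ u) • f) := by
      simp only [vecMulVec_mul_vecMulVec, smul_dotProduct, smul_eq_mul, add_smul, one_smul,
        vecMulVec_add]
    _ = 0 := by rw [h, zero_smul, vecMulVec_zero]

variable [DecidableEq ι]

theorem one_add_vecMulVec_braid (hu : 1 + f ⬝ᵥ u + f ⬝ᵥ v * g ⬝ᵥ u = 0)
    (hv : 1 + g ⬝ᵥ v + g ⬝ᵥ u * f ⬝ᵥ v = 0) :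
    (1 + vecMulVec u f) * (1 + vecMulVec v g) * (1 + vecMulVec u f) =
      (1 + vecMulVec v g) * (1 + vecMulVec u f) * (1 + vecMulVec v g) := by
  rw [one_add_braid_iff, vecMulVec_add_mul_self_add_mul_mul_eq_zero hu,
    vecMulVec_add_mul_self_add_mul_mul_eq_zero hv]

theorem commute_one_add_vecMulVec (hfv : f ⬝ᵥ v = 0) (hgu : g ⬝ᵥ u = 0) :
    Commute (1 + vecMulVec u f) (1 + vecMulVec v g) := by
  have comm : Commute (vecMulVec u f) (vecMulVec v g) := by
    simp only [Commute, SemiconjBy, vecMulVec_mul_vecMulVec, hfv, hgu, zero_smul, vecMulVec_zero]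
  exact (Commute.one_left _).add_left ((Commute.one_right _).add_right comm)

end RankOnePerturbation

section ReducedBurau

variable {R : Type*} [Ring R] (t : R) (n : ℕ) {i j : ℕ}

/-- The entries of the tridiagonal `t`-deformed Cartan matrix of type `A`, with diagonal `-1 - t`,
subdiagonal `t` and superdiagonal `1`. Its row `i` is the difference between row `i` of `b_i` and
row `i` of the identity. -/
def burauCartan (i j : ℕ) : R :=
  if j = i then -1 - t else if j + 1 = i then t else if j = i + 1 then 1 else 0

theorem burauCartan_self : burauCartan t i i = -1 - t := if_pos rfl

theorem burauCartan_succ_left : burauCartan t (i + 1) i = t := by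
  simp [burauCartan]

theorem burauCartan_succ_right : burauCartan t i (i + 1) = 1 := by
  simp [burauCartan, add_assoc]

theorem one_add_burauCartan_add_mul_eq_zero (h : j = i + 1 ∨ i = j + 1) :
    1 + burauCartan t i i + burauCartan t i j * burauCartan t j i = 0 := by
  have off_diag : burauCartan t i j * burauCartan t j i = t := by
    rcases h with rfl | rfl <;> simp [burauCartan_succ_left, burauCartan_succ_right]
  rw [burauCartan_self, off_diag]
  abel

theorem burauCartan_eq_zero (h : i + 2 ≤ j ∨ j + 2 ≤ i) : burauCartan t i j = 0 := by
  rw [burauCartan, if_neg (by lia), if_neg (by lia), if_neg (by lia)]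

/-- The `i`-th standard basis column of `R^(n-1)`, counted from `1`; it is zero unless
`1 ≤ i ≤ n - 1`. -/
def burauCol (i : ℕ) : Fin (n - 1) → R := fun a => if (a : ℕ) + 1 = i then 1 else 0

/-- Row `i` of the deformed Cartan matrix, with rows and columns counted from `1`, cut off to
length `n - 1`. -/
def burauRow (i : ℕ) : Fin (n - 1) → R := fun b => burauCartan t i (b + 1)

/-- The reduced Burau matrix of the generator `σ_i` of `B_n`, over any ring and with an arbitrary
parameter `t` in place of `q²`, as a rank-one perturbation of the identity. -/
def reducedBurau (i : ℕ) : Matrix (Fin (n - 1)) (Fin (n - 1)) R :=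
  1 + vecMulVec (burauCol n i) (burauRow t n i)

theorem burauRow_dotProduct_burauCol (hj : 1 ≤ j) (hjn : j ≤ n - 1) :
    burauRow t n i ⬝ᵥ burauCol n j = burauCartan t i j := by
  obtain ⟨k, rfl⟩ : ∃ k, j = k + 1 := Nat.exists_eq_add_of_le' hj
  have col_eq_single : burauCol n (k + 1) = Pi.single (⟨k, hjn⟩ : Fin (n - 1)) (1 : R) := by
    ext a
    simp [burauCol, Pi.single_apply, Fin.ext_iff]
  rw [col_eq_single, dotProduct_single_one, burauRow]

theorem rburau_eq_reducedBurau (i : ℕ) : rburau n i = reducedBurau (T 1 ^ 2) n i := by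
  ext1 a b
  simp only [rburau, reducedBurau, burauCol, burauRow, burauCartan, of_apply, Matrix.add_apply,
    one_apply, vecMulVec_apply, Fin.ext_iff]
  split_ifs <;> first | lia | ring

end ReducedBurau

theorem stmt11_general {R : Type*} [Ring R] (t : R) (n : ℕ) :
    (∀ i : ℕ, 1 ≤ i → i ≤ n - 2 →
      reducedBurau t n i * reducedBurau t n (i + 1) * reducedBurau t n i =
        reducedBurau t n (i + 1) * reducedBurau t n i * reducedBurau t n (i + 1)) ∧
    (∀ i j : ℕ, 1 ≤ i → i ≤ n - 1 → 1 ≤ j → j ≤ n - 1 → (i + 2 ≤ j ∨ j + 2 ≤ i) →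
      reducedBurau t n i * reducedBurau t n j = reducedBurau t n j * reducedBurau t n i) := by
  constructor
  · intro i hi hin
    have dot_col (k : ℕ) : burauRow t n k ⬝ᵥ burauCol n i = burauCartan t k i :=
      burauRow_dotProduct_burauCol t n hi (by lia)
    have dot_col_succ (k : ℕ) : burauRow t n k ⬝ᵥ burauCol n (i + 1) = burauCartan t k (i + 1) :=
      burauRow_dotProduct_burauCol t n (by lia) (by lia)
    apply one_add_vecMulVec_braid
    · simpa only [dot_col, dot_col_succ] using
        one_add_burauCartan_add_mul_eq_zero t (i := i) (j := i + 1) (.inl rfl)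
    · simpa only [dot_col, dot_col_succ] using
        one_add_burauCartan_add_mul_eq_zero t (i := i + 1) (j := i) (.inr rfl)
  · intro i j hi hin hj hjn hij
    apply commute_one_add_vecMulVec
    · rw [burauRow_dotProduct_burauCol t n hj hjn, burauCartan_eq_zero t hij]
    · rw [burauRow_dotProduct_burauCol t n hi hin, burauCartan_eq_zero t hij.symm]

/-- The reduced Burau matrices satisfy the braid group relations of `B_n`. -/
theorem stmt11 (n : ℕ) (hn : 3 ≤ n) :
    (∀ i : ℕ, 1 ≤ i → i ≤ n - 2 →
      rburau n i * rburau n (i + 1) * rburau n i =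
        rburau n (i + 1) * rburau n i * rburau n (i + 1)) ∧
    (∀ i j : ℕ, 1 ≤ i → i ≤ n - 1 → 1 ≤ j → j ≤ n - 1 → (i + 2 ≤ j ∨ j + 2 ≤ i) →
      rburau n i * rburau n j = rburau n j * rburau n i) := by
  simpa only [rburau_eq_reducedBurau] using stmt11_general (T 1 ^ 2 : LaurentPolynomial ℤ) n
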